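/- There is a universal constant C > 0 such that for every Fueter map u defined on an open subset of ℝ³ containing the closed ball B̄_r(x), one has sup_{y ∈ B_{r/4}(x)} |du(y)|² ≤ C r^{−3} ∫_{B_r(x)} |du|². -/

import Mathlib

/-!
A Fueter map is harmonic: with `D = i∂₁ + j∂₂ + k∂₃` one has `D² = -Δ`, since the units square to `-1`
and anticommute while partial derivatives commute (`fueter_laplacian`). The equation has constant
coefficients, so each `∂ₐu` is again Fueter (`fueter_pd`), hence harmonic. The estimate then follows
from the mean value inequality for `|∂ₐu|²` on `B_{r/2}(y) ⊆ B_r(x)`, summed over `a`.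

The mean value property (`mean_value`) is proved for averages with the radial weight
`wt z = (1 - |z|²)₊` instead of averages over spheres or balls. As `wt z • z` is a multiple of
`∇(wt²)`, the derivative of the average in the radius is, by one integration by parts on all of `ℝ³`,
a multiple of `∫ wt² Δg`, and no boundary terms occur. Expanding the weighted average of
`|g - g(y)|²` turns this into the inequality for `|g|²` (`sq_norm_le`).

A bump function makes `u` smooth on all of `ℝ³` without changing it near points of `B_r(x)`
(`exists_cutoff`), so the analysis above only deals with globally smooth maps.
-/

open MeasureTheory Metric

/-- The source: Euclidean `ℝ³`. -/
abbrev E3 := EuclideanSpace ℝ (Fin 3)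

/-- The imaginary quaternion units. -/
noncomputable def qi : Quaternion ℝ := ⟨0, 1, 0, 0⟩
noncomputable def qj : Quaternion ℝ := ⟨0, 0, 1, 0⟩
noncomputable def qk : Quaternion ℝ := ⟨0, 0, 0, 1⟩

/-- The partial derivative of `u` in the `a`-th coordinate direction. -/
noncomputable def pd (u : E3 → Quaternion ℝ) (a : Fin 3) (y : E3) : Quaternion ℝ :=
  fderiv ℝ u y (EuclideanSpace.single a 1)

/-- `u` is a Fueter map on the open set `U`: it is smooth and satisfies
`i ∂₁u + j ∂₂u + k ∂₃u = 0` on `U`. -/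
def IsFueterOn (u : E3 → Quaternion ℝ) (U : Set E3) : Prop :=
  ContDiffOn ℝ (⊤ : ℕ∞) u U ∧
    ∀ y ∈ U, qi * pd u 0 y + qj * pd u 1 y + qk * pd u 2 y = 0

/-- The energy density `|du|² = |∂₁u|² + |∂₂u|² + |∂₃u|²`. -/
noncomputable def eDensity (u : E3 → Quaternion ℝ) (y : E3) : ℝ :=
  ‖pd u 0 y‖ ^ 2 + ‖pd u 1 y‖ ^ 2 + ‖pd u 2 y‖ ^ 2

/-- The radial derivative `∂_ρ u (y)` of `u` at `y`, in the unit radial direction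
emanating from `x`. -/
noncomputable def radialDeriv (u : E3 → Quaternion ℝ) (x y : E3) : Quaternion ℝ :=
  fderiv ℝ u y (‖y - x‖⁻¹ • (y - x))

/-! ### The averaging weight -/

/-- The radial averaging weight `(1 - |z|²)₊`, supported in the closed unit ball. It is chosen so
that `z ↦ wt z • z` is a multiple of the gradient of the `C¹` function `wt²`, see `fderiv_wt_sq`. -/
noncomputable def wt (z : E3) : ℝ := max (1 - ‖z‖ ^ 2) 0

lemma continuous_wt : Continuous wt := by unfold wt; fun_prop

lemma wt_nonneg (z : E3) : 0 ≤ wt z := le_max_right _ _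

lemma wt_le_one (z : E3) : wt z ≤ 1 :=
  max_le (by nlinarith [sq_nonneg ‖z‖]) zero_le_one

lemma wt_eq_zero {z : E3} (hz : z ∉ ball (0 : E3) 1) : wt z = 0 := by
  have h : 1 ≤ ‖z‖ := by simpa using hz
  exact max_eq_right (by nlinarith)

lemma hasCompactSupport_wt : HasCompactSupport wt :=
  HasCompactSupport.intro (isCompact_closedBall (0 : E3) 1)
    fun _ hz => wt_eq_zero fun h => hz (ball_subset_closedBall h)

lemma integrable_of_wt_smul {F : Type*} [NormedAddCommGroup F] [NormedSpace ℝ F]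
    {g : E3 → F} (hg : Continuous g) : Integrable fun z => wt z • g z :=
  (continuous_wt.smul hg).integrable_of_hasCompactSupport
    (hasCompactSupport_wt.smul_right (f' := g))

lemma integral_wt_pos : 0 < ∫ z, wt z := by
  refine continuous_wt.integral_pos_of_hasCompactSupport_nonneg_nonzero
    hasCompactSupport_wt wt_nonneg (x := 0) ?_
  simp [wt]

lemma hasDerivAt_max_sq (s : ℝ) :
    HasDerivAt (fun s : ℝ => (max s 0) ^ 2) (2 * max s 0) s := by
  rcases lt_trichotomy s 0 with h | rfl | h
  · have e : (fun s : ℝ => (max s 0) ^ 2) =ᶠ[nhds s] fun _ => 0 := by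
      filter_upwards [Iio_mem_nhds h] with x hx
      rw [max_eq_right (le_of_lt hx)]; simp
    rw [max_eq_right h.le, mul_zero]
    exact (hasDerivAt_const s (0 : ℝ)).congr_of_eventuallyEq e
  -- At the origin `(max s 0)²` is squeezed by `s²`.
  · rw [hasDerivAt_iff_isLittleO]
    have h2 : (fun x : ℝ => x ^ 2) =o[nhds 0] fun x => x := by
      simpa using Asymptotics.isLittleO_pow_pow (𝕜 := ℝ) (m := 1) (n := 2) (by norm_num)
    refine Asymptotics.IsBigO.trans_isLittleO (g := fun x : ℝ => x ^ 2) ?_ (by simpa using h2)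
    refine Asymptotics.IsBigO.of_bound 1 (Filter.Eventually.of_forall fun x => ?_)
    rcases le_total x 0 with hx | hx
    · simp [max_eq_right hx, sq_nonneg]
    · simp [max_eq_left hx]
  · have e : (fun s : ℝ => (max s 0) ^ 2) =ᶠ[nhds s] fun x => x ^ 2 := by
      filter_upwards [Ioi_mem_nhds h] with x hx
      rw [max_eq_left (le_of_lt hx)]
    rw [max_eq_left h.le]
    simpa using (hasDerivAt_pow 2 s).congr_of_eventuallyEq e

lemma hasFDerivAt_wt_sq (z : E3) :
    HasFDerivAt (fun z => wt z ^ 2) ((-4 * wt z) • innerSL ℝ z) z := by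
  have h1 : HasFDerivAt (fun z : E3 => 1 - ‖z‖ ^ 2) (-(2 • innerSL ℝ z)) z :=
    (hasStrictFDerivAt_norm_sq z).hasFDerivAt.const_sub 1
  have h2 := (hasDerivAt_max_sq (1 - ‖z‖ ^ 2)).comp_hasFDerivAt z h1
  refine h2.congr_fderiv ?_
  ext w
  simp [wt]
  ring

/-- The identity `∂ₐ(wt²) = -4 zₐ wt`, which makes `wt z • z` a gradient field. -/
lemma fderiv_wt_sq (z : E3) (a : Fin 3) :
    fderiv ℝ (fun z => wt z ^ 2) z (EuclideanSpace.single a 1) = -4 * wt z * z a := by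
  rw [(hasFDerivAt_wt_sq z).fderiv]
  simp [EuclideanSpace.inner_single_right]

/-! ### Fueter maps are harmonic -/

lemma contDiff_pd {v : E3 → Quaternion ℝ} (hv : ContDiff ℝ (⊤ : ℕ∞) v) (a : Fin 3) :
    ContDiff ℝ (⊤ : ℕ∞) (pd v a) := by
  unfold pd
  exact (hv.fderiv_right (m := (⊤ : ℕ∞)) (by simp)).clm_apply contDiff_const

lemma pd_comm {v : E3 → Quaternion ℝ} (hv : ContDiff ℝ (⊤ : ℕ∞) v) (a b : Fin 3) (y : E3) :
    pd (pd v a) b y = pd (pd v b) a y := by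
  have hd : DifferentiableAt ℝ (fderiv ℝ v) y :=
    (hv.fderiv_right (m := (⊤ : ℕ∞)) (by simp)).differentiable (by simp) y
  have key : ∀ c d : Fin 3, pd (pd v c) d y =
      fderiv ℝ (fderiv ℝ v) y (EuclideanSpace.single d 1) (EuclideanSpace.single c 1) := by
    intro c d
    unfold pd
    rw [fderiv_clm_apply hd (differentiableAt_const _)]
    simp
  rw [key, key]
  exact (hv.contDiffAt.isSymmSndFDerivAt
    (by simpa using! (mod_cast le_top : ((2 : ℕ∞) : WithTop ℕ∞) ≤ ((⊤ : ℕ∞) : WithTop ℕ∞)))) _ _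

/-- The `b`-th partial derivative of the Fueter equation. -/
lemma fueter_pd_pd {v : E3 → Quaternion ℝ} (hv : ContDiff ℝ (⊤ : ℕ∞) v) {B : Set E3}
    (hB : IsOpen B) (h : ∀ y ∈ B, qi * pd v 0 y + qj * pd v 1 y + qk * pd v 2 y = 0)
    (b : Fin 3) {y : E3} (hy : y ∈ B) :
    qi * pd (pd v 0) b y + qj * pd (pd v 1) b y + qk * pd (pd v 2) b y = 0 := by
  have e : (fun y => qi * pd v 0 y + qj * pd v 1 y + qk * pd v 2 y) =ᶠ[nhds y] fun _ => 0 := by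
    filter_upwards [hB.mem_nhds hy] with z hz using h z hz
  have hd : ∀ a, HasFDerivAt (pd v a) (fderiv ℝ (pd v a) y) y := fun a =>
    ((contDiff_pd hv a).differentiable (by simp) y).hasFDerivAt
  have h1 := (((hd 0).const_mul qi).add ((hd 1).const_mul qj)).add ((hd 2).const_mul qk)
  have h2 := h1.unique ((hasFDerivAt_const (0 : Quaternion ℝ) y).congr_of_eventuallyEq e)
  simpa [pd] using DFunLike.congr_fun h2 (EuclideanSpace.single b 1)

/-- The Fueter equation has constant coefficients, so partial derivatives of a Fueter map are
again Fueter maps. -/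
lemma fueter_pd {v : E3 → Quaternion ℝ} (hv : ContDiff ℝ (⊤ : ℕ∞) v) {B : Set E3}
    (hB : IsOpen B) (h : ∀ y ∈ B, qi * pd v 0 y + qj * pd v 1 y + qk * pd v 2 y = 0)
    (c : Fin 3) : ∀ y ∈ B, qi * pd (pd v c) 0 y + qj * pd (pd v c) 1 y
      + qk * pd (pd v c) 2 y = 0 := by
  intro y hy
  rw [pd_comm hv c 0, pd_comm hv c 1, pd_comm hv c 2]
  exact fueter_pd_pd hv hB h c hy

/-- The algebra behind `D² = -Δ` for `D = i∂₁ + j∂₂ + k∂₃`: here `p` plays the role of the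
symmetric matrix of second derivatives. Multiplying the rows by `i`, `j`, `k` on the left and adding,
the off-diagonal terms cancel because distinct units anticommute. -/
lemma sum_eq_zero_of_rows {p00 p01 p02 p11 p12 p22 : Quaternion ℝ}
    (h0 : qi * p00 + qj * p01 + qk * p02 = 0) (h1 : qi * p01 + qj * p11 + qk * p12 = 0)
    (h2 : qi * p02 + qj * p12 + qk * p22 = 0) : p00 + p11 + p22 = 0 := by
  have i0 : qi.re = 0 := rfl
  have i1 : qi.imI = 1 := rfl
  have i2 : qi.imJ = 0 := rfl
  have i3 : qi.imK = 0 := rfl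
  have j0 : qj.re = 0 := rfl
  have j1 : qj.imI = 0 := rfl
  have j2 : qj.imJ = 1 := rfl
  have j3 : qj.imK = 0 := rfl
  have k0 : qk.re = 0 := rfl
  have k1 : qk.imI = 0 := rfl
  have k2 : qk.imJ = 0 := rfl
  have k3 : qk.imK = 1 := rfl
  simp only [Quaternion.ext_iff, Quaternion.re_mul, Quaternion.imI_mul,
    Quaternion.imJ_mul, Quaternion.imK_mul, Quaternion.re_add, Quaternion.imI_add,
    Quaternion.imJ_add, Quaternion.imK_add, Quaternion.re_zero, Quaternion.imI_zero,
    Quaternion.imJ_zero, Quaternion.imK_zero, i0, i1, i2, i3, j0, j1, j2, j3, k0, k1, k2, k3]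
    at h0 h1 h2 ⊢
  obtain ⟨a1, a2, a3, a4⟩ := h0
  obtain ⟨b1, b2, b3, b4⟩ := h1
  obtain ⟨c1, c2, c3, c4⟩ := h2
  refine ⟨?_, ?_, ?_, ?_⟩ <;> linarith

/-- A Fueter map is harmonic. -/
lemma fueter_laplacian {v : E3 → Quaternion ℝ} (hv : ContDiff ℝ (⊤ : ℕ∞) v) {B : Set E3}
    (hB : IsOpen B) (h : ∀ y ∈ B, qi * pd v 0 y + qj * pd v 1 y + qk * pd v 2 y = 0)
    {y : E3} (hy : y ∈ B) : ∑ a, pd (pd v a) a y = 0 := by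
  have h0 := fueter_pd_pd hv hB h 0 hy
  have h1 := fueter_pd_pd hv hB h 1 hy
  have h2 := fueter_pd_pd hv hB h 2 hy
  rw [pd_comm hv 1 0, pd_comm hv 2 0] at h0
  rw [pd_comm hv 2 1] at h1
  rw [Fin.sum_univ_three]
  exact sum_eq_zero_of_rows h0 h1 h2

/-! ### The mean value property -/

/-- The weighted average of `g` over the ball of radius `t` about `y`, rescaled to the unit ball,
may be differentiated in `t` under the integral sign. -/
lemma hasDerivAt_integral_wt {g : E3 → Quaternion ℝ} (hg : ContDiff ℝ (⊤ : ℕ∞) g) (y : E3)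
    (t : ℝ) : HasDerivAt (fun t : ℝ => ∫ z, wt z • g (y + t • z))
      (∫ z, wt z • fderiv ℝ g (y + t • z) z) t := by
  have hg' : Continuous (fderiv ℝ g) := hg.continuous_fderiv (by simp)
  have hc : Continuous fun p : ℝ × E3 => fderiv ℝ g (y + p.1 • p.2) p.2 := by fun_prop
  obtain ⟨M, hM⟩ := ((isCompact_closedBall t 1).prod
    (isCompact_closedBall (0 : E3) 1)).exists_bound_of_continuousOn hc.continuousOn
  have hcg : Continuous g := hg.continuous
  refine (hasDerivAt_integral_of_dominated_loc_of_deriv_le (s := closedBall t 1)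
    (F' := fun t z => wt z • fderiv ℝ g (y + t • z) z) (bound := fun z => wt z • M)
    (closedBall_mem_nhds t one_pos) ?_ ?_ ?_ ?_ ?_ ?_).2
  · exact Filter.Eventually.of_forall fun s =>
      (integrable_of_wt_smul (by fun_prop)).aestronglyMeasurable
  · exact integrable_of_wt_smul (by fun_prop)
  · exact (integrable_of_wt_smul (by fun_prop)).aestronglyMeasurable
  · refine Filter.Eventually.of_forall fun z s hs => ?_
    by_cases hz : z ∈ ball (0 : E3) 1
    · rw [norm_smul, Real.norm_of_nonneg (wt_nonneg z), smul_eq_mul]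
      exact mul_le_mul_of_nonneg_left (hM (s, z) ⟨hs, ball_subset_closedBall hz⟩) (wt_nonneg z)
    · simp [wt_eq_zero hz]
  · exact integrable_of_wt_smul continuous_const
  · refine Filter.Eventually.of_forall fun z s _ => ?_
    have h1 : HasDerivAt (fun s : ℝ => y + s • z) z s := by
      simpa using ((hasDerivAt_id s).smul_const z).const_add y
    exact ((hg.differentiable (by simp) _).hasFDerivAt.comp_hasDerivAt s h1).const_smul (wt z)

/-- Integration by parts against `∂ₐ(wt²) = -4 zₐ wt`. -/
lemma integral_wt_coord {h : E3 → Quaternion ℝ} (hh : ContDiff ℝ (⊤ : ℕ∞) h) (y : E3) (t : ℝ)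
    (a : Fin 3) : ∫ z, wt z • (z a • h (y + t • z)) =
      (t / 4) • ∫ z, wt z • (wt z • pd h a (y + t • z)) := by
  have hfd : ∀ z, HasFDerivAt (fun z => h (y + t • z)) (t • fderiv ℝ h (y + t • z)) z := by
    intro z
    have h1 : HasFDerivAt (fun z : E3 => y + t • z) (t • ContinuousLinearMap.id ℝ E3) z :=
      ((hasFDerivAt_id z).const_smul t).const_add y
    refine ((hh.differentiable (by simp) _).hasFDerivAt.comp z h1).congr_fderiv ?_
    ext1 w; simp
  have hch : Continuous h := hh.continuous
  have hcp : Continuous (pd h a) := (contDiff_pd hh a).continuous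
  have hw := continuous_wt
  have e1 : ∀ z, fderiv ℝ (fun z => wt z ^ 2) z (EuclideanSpace.single a 1) • h (y + t • z) =
      wt z • ((-4 : ℝ) • (z a • h (y + t • z))) := fun z => by
    rw [fderiv_wt_sq]; simp only [smul_smul]; congr 1; ring
  have e2 : ∀ z, wt z ^ 2 • fderiv ℝ (fun z => h (y + t • z)) z (EuclideanSpace.single a 1) =
      t • (wt z • (wt z • pd h a (y + t • z))) := fun z => by
    rw [(hfd z).fderiv]; simp only [pd, smul_apply, smul_smul]
    congr 1; ring
  have key := integral_smul_fderiv_eq_neg_fderiv_smul_of_integrable (μ := volume)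
    (f := fun z => wt z ^ 2) (g := fun z => h (y + t • z)) (v := EuclideanSpace.single a 1)
    (by simp only [e1]; exact integrable_of_wt_smul (by fun_prop))
    (by simp only [e2]; exact (integrable_of_wt_smul (by fun_prop)).smul t)
    (by simp only [sq, mul_smul]; exact integrable_of_wt_smul (by fun_prop))
    (fun z _ => (hasFDerivAt_wt_sq z).differentiableAt) (fun z _ => (hfd z).differentiableAt)
  simp only [e1, e2] at key
  simp only [smul_comm (wt _) (-4 : ℝ), integral_smul] at key
  rw [div_eq_inv_mul, mul_smul, key, ← neg_smul, smul_smul]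
  norm_num

lemma fderiv_apply_eq_sum (g : E3 → Quaternion ℝ) (x z : E3) :
    fderiv ℝ g x z = ∑ a, z a • pd g a x := by
  conv_lhs => rw [← (EuclideanSpace.basisFun (Fin 3) ℝ).sum_repr z]
  simp [pd]

/-- The mean value property: if `Δg = 0` on `B_R(y)`, the `wt`-weighted average of `g` over that
ball is `g y`. The derivative in `t` of the average over `B_t(y)` is, after integration by parts,
`(t/4) ∫ wt² Δg(y + t z) dz = 0`. -/
lemma mean_value {g : E3 → Quaternion ℝ} (hg : ContDiff ℝ (⊤ : ℕ∞) g) (y : E3) {R : ℝ}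
    (hR : 0 ≤ R) (hL : ∀ x ∈ ball y R, ∑ a, pd (pd g a) a x = 0) :
    ∫ z, wt z • g (y + R • z) = (∫ z, wt z) • g y := by
  have hcg : ∀ a, Continuous (pd g a) := fun a => (contDiff_pd hg a).continuous
  have hcgg : ∀ a, Continuous (pd (pd g a) a) := fun a =>
    (contDiff_pd (contDiff_pd hg a) a).continuous
  have hw := continuous_wt
  have hz : ∀ t ∈ Set.Ico 0 R, ∫ z, wt z • fderiv ℝ g (y + t • z) z = 0 := by
    intro t ht
    simp only [fderiv_apply_eq_sum, Finset.smul_sum]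
    rw [integral_finsetSum _ fun a _ => integrable_of_wt_smul (by have := hcg a; fun_prop)]
    simp only [integral_wt_coord (contDiff_pd hg _)]
    rw [← Finset.smul_sum, ← integral_finsetSum _ fun a _ =>
      integrable_of_wt_smul (by have := hcgg a; fun_prop)]
    simp only [← Finset.smul_sum]
    convert smul_zero (t / 4)
    refine integral_eq_zero_of_ae (Filter.Eventually.of_forall fun z => ?_)
    by_cases hzb : z ∈ ball (0 : E3) 1
    · have hz1 : ‖z‖ < 1 := by simpa using hzb
      have : y + t • z ∈ ball y R := by
        rw [mem_ball_iff_norm, add_sub_cancel_left, norm_smul, Real.norm_of_nonneg ht.1]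
        nlinarith [ht.1, ht.2, norm_nonneg z]
      simp [hL _ this]
    · simp [wt_eq_zero hzb]
  have hd := hasDerivAt_integral_wt hg y
  have := constant_of_has_deriv_right_zero (a := 0) (b := R)
    (f := fun t : ℝ => ∫ z, wt z • g (y + t • z))
    (fun t _ => (hd t).continuousAt.continuousWithinAt)
    (fun t ht => (hz t ht) ▸ (hd t).hasDerivWithinAt) R ⟨hR, le_rfl⟩
  simpa [integral_smul_const] using this

/-- The mean value inequality for `|g|²`, `g` harmonic: expand
`0 ≤ ∫ wt |g(y + R z) - g(y)|² dz` and evaluate the cross term by the mean value property. -/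
lemma sq_norm_le {g : E3 → Quaternion ℝ} (hg : ContDiff ℝ (⊤ : ℕ∞) g) (y : E3) {R : ℝ}
    (hR : 0 < R) (hL : ∀ x ∈ ball y R, ∑ a, pd (pd g a) a x = 0) :
    (∫ z, wt z) * ‖g y‖ ^ 2 ≤ ∫ z, wt z * ‖g (y + R • z)‖ ^ 2 := by
  have hcg : Continuous g := hg.continuous
  have i1 : Integrable fun z => wt z • ‖g (y + R • z)‖ ^ 2 :=
    integrable_of_wt_smul (by fun_prop)
  have i2 : Integrable fun z => wt z • g (y + R • z) := integrable_of_wt_smul (by fun_prop)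
  have i3 : Integrable fun z => wt z • ‖g y‖ ^ 2 := integrable_of_wt_smul continuous_const
  have i4 : Integrable fun z => inner ℝ (g y) (wt z • g (y + R • z)) := i2.const_inner _
  have h1 : 0 ≤ ∫ z, wt z * ‖g (y + R • z) - g y‖ ^ 2 :=
    integral_nonneg fun z => mul_nonneg (wt_nonneg z) (sq_nonneg _)
  have e : ∀ z, wt z * ‖g (y + R • z) - g y‖ ^ 2 = wt z • ‖g (y + R • z)‖ ^ 2
      - 2 * inner ℝ (g y) (wt z • g (y + R • z)) + wt z • ‖g y‖ ^ 2 := fun z => by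
    rw [norm_sub_sq_real, real_inner_smul_right, real_inner_comm]
    simp only [smul_eq_mul]; ring
  simp only [e] at h1
  have i5 : Integrable fun z => wt z • ‖g (y + R • z)‖ ^ 2
      - 2 * inner ℝ (g y) (wt z • g (y + R • z)) := i1.sub (i4.const_mul 2)
  rw [integral_add i5 i3, integral_sub i1 (i4.const_mul 2),
    integral_const_mul, integral_inner i2, mean_value hg y hR.le hL, real_inner_smul_right,
    real_inner_self_eq_norm_sq, integral_smul_const] at h1
  simp only [smul_eq_mul] at h1
  linarith

/-! ### The energy estimate -/

lemma continuous_eDensity {v : E3 → Quaternion ℝ} (hv : ContDiff ℝ (⊤ : ℕ∞) v) :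
    Continuous (eDensity v) := by
  have h : ∀ a, Continuous (pd v a) := fun a => (contDiff_pd hv a).continuous
  have h0 := h 0
  have h1 := h 1
  have h2 := h 2
  unfold eDensity
  fun_prop

lemma eDensity_nonneg (v : E3 → Quaternion ℝ) (y : E3) : 0 ≤ eDensity v y := by
  unfold eDensity; positivity

/-- The estimate at the centre of a ball, for maps that are smooth on all of `ℝ³`. -/
lemma eDensity_le {v : E3 → Quaternion ℝ} (hv : ContDiff ℝ (⊤ : ℕ∞) v) (y : E3) {R : ℝ}
    (hR : 0 < R) (h : ∀ x ∈ ball y R, qi * pd v 0 x + qj * pd v 1 x + qk * pd v 2 x = 0) :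
    (∫ z, wt z) * eDensity v y ≤ (R ^ 3)⁻¹ * ∫ z in ball y R, eDensity v z := by
  have hce := continuous_eDensity hv
  have hs : ∀ a, (∫ z, wt z) * ‖pd v a y‖ ^ 2 ≤ ∫ z, wt z * ‖pd v a (y + R • z)‖ ^ 2 := fun a =>
    sq_norm_le (contDiff_pd hv a) y hR fun x hx =>
      fueter_laplacian (contDiff_pd hv a) isOpen_ball (fueter_pd hv isOpen_ball h a) hx
  have hi : ∀ a, Integrable fun z => wt z * ‖pd v a (y + R • z)‖ ^ 2 := fun a =>
    integrable_of_wt_smul (g := fun z => ‖pd v a (y + R • z)‖ ^ 2)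
      (by have := (contDiff_pd hv a).continuous; fun_prop)
  calc (∫ z, wt z) * eDensity v y
      ≤ ∫ z, wt z * eDensity v (y + R • z) := by
        simp only [eDensity, mul_add]
        have h01 : Integrable fun z => wt z * ‖pd v 0 (y + R • z)‖ ^ 2
            + wt z * ‖pd v 1 (y + R • z)‖ ^ 2 := (hi 0).add (hi 1)
        rw [integral_add h01 (hi 2), integral_add (hi 0) (hi 1)]
        exact add_le_add (add_le_add (hs 0) (hs 1)) (hs 2)
    -- `wt` is at most the indicator function of the unit ball.
    _ ≤ ∫ z, (ball y R).indicator (eDensity v) (y + R • z) := by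
        refine integral_mono (integrable_of_wt_smul (g := fun z => eDensity v (y + R • z))
          (by fun_prop)) ?_ fun z => ?_
        · have hI : Integrable ((ball y R).indicator (eDensity v)) :=
            (integrable_indicator_iff measurableSet_ball).2
              ((hce.continuousOn.integrableOn_compact (isCompact_closedBall y R)).mono_set
                ball_subset_closedBall)
          exact (hI.comp_add_left y).comp_smul hR.ne'
        · by_cases hz : z ∈ ball (0 : E3) 1
          · have hz' : y + R • z ∈ ball y R := by
              have hz1 : ‖z‖ < 1 := by simpa using hz
              rw [mem_ball_iff_norm, add_sub_cancel_left, norm_smul, Real.norm_of_nonneg hR.le]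
              nlinarith
            simp only [Set.indicator_of_mem hz']
            exact mul_le_of_le_one_left (eDensity_nonneg _ _) (wt_le_one z)
          · simp only [wt_eq_zero hz, zero_mul]
            exact Set.indicator_nonneg (fun _ _ => eDensity_nonneg _ _) _
    _ = (R ^ 3)⁻¹ * ∫ z in ball y R, eDensity v z := by
        rw [Measure.integral_comp_smul volume
          (fun w => (ball y R).indicator (eDensity v) (y + w)) R,
          integral_add_left_eq_self, integral_indicator measurableSet_ball, finrank_euclideanSpace]
        rw [abs_of_nonneg (by positivity)]
        simp

/-- Multiplying by a bump function, a map smooth near `closedBall x r` is replaced by one that is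
smooth on all of `ℝ³` and has the same germs at points of `ball x r`. -/
lemma exists_cutoff {u : E3 → Quaternion ℝ} {U : Set E3} (hU : IsOpen U) {x : E3} {r : ℝ}
    (hr : 0 < r) (hsub : closedBall x r ⊆ U) (hu : ContDiffOn ℝ (⊤ : ℕ∞) u U) :
    ∃ v : E3 → Quaternion ℝ, ContDiff ℝ (⊤ : ℕ∞) v ∧ ∀ y ∈ ball x r, v =ᶠ[nhds y] u := by
  obtain ⟨δ, hδ, hδU⟩ := (isCompact_closedBall x r).exists_cthickening_subset_open hU hsub
  rw [cthickening_closedBall hδ.le hr.le] at hδU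
  let χ : ContDiffBump x := ⟨r, δ + r, hr, by linarith⟩
  refine ⟨fun y => χ y • u y, ?_, fun y hy => ?_⟩
  · rw [contDiff_iff_contDiffAt]
    intro y
    by_cases hy : y ∈ U
    · exact χ.contDiffAt.smul (hu.contDiffAt (hU.mem_nhds hy))
    · have hy' : y ∉ tsupport χ := by
        rw [χ.tsupport_eq]
        exact fun h => hy (hδU h)
      refine (contDiffAt_const (c := (0 : Quaternion ℝ))).congr_of_eventuallyEq ?_
      filter_upwards [notMem_tsupport_iff_eventuallyEq.1 hy'] with z hz
      simp [hz]
  · filter_upwards [χ.eventuallyEq_one_of_mem_ball hy] with z hz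
    simp [hz]

/-- The ε-regularity estimate (Proposition 3.1 of the paper) in the flat case:
a universal interior `L^∞`-bound on `|du|²` by the renormalised energy. -/
theorem flat_epsilon_regularity :
    ∃ C > (0:ℝ), ∀ (u : E3 → Quaternion ℝ) (U : Set E3), IsOpen U →
      ∀ (x : E3) (r : ℝ), 0 < r → closedBall x r ⊆ U → IsFueterOn u U →
        ∀ y ∈ ball x (r / 4),
          eDensity u y ≤ C * (∫ z in ball x r, eDensity u z) / r ^ 3 := by
  have hm := integral_wt_pos
  -- The estimate is used on balls of radius `r / 2`; the factor `8` is `2 ^ 3`.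
  refine ⟨8 / ∫ z, wt z, by positivity, ?_⟩
  intro u U hU x r hr hsub ⟨hu, hF⟩ y hy
  obtain ⟨v, hv, hvu⟩ := exists_cutoff hU hr hsub hu
  have hpd : ∀ z ∈ ball x r, ∀ a, pd v a z = pd u a z := fun z hz a => by
    simp only [pd, (hvu z hz).fderiv_eq]
  have hE : ∀ z ∈ ball x r, eDensity v z = eDensity u z := fun z hz => by
    simp only [eDensity, hpd z hz]
  have hyr : y ∈ ball x r := ball_subset_ball (by linarith) hy
  have hb : ball y (r / 2) ⊆ ball x r :=
    ball_subset_ball' (by rw [mem_ball] at hy; linarith)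
  have h1 := eDensity_le hv y (half_pos hr) fun z hz => by
    rw [hpd z (hb hz), hpd z (hb hz), hpd z (hb hz)]
    exact hF z (hsub (ball_subset_closedBall (hb hz)))
  have h2 : ∫ z in ball y (r / 2), eDensity v z ≤ ∫ z in ball x r, eDensity v z :=
    setIntegral_mono_set
      (((continuous_eDensity hv).continuousOn.integrableOn_compact
        (isCompact_closedBall x r)).mono_set ball_subset_closedBall)
      (Filter.Eventually.of_forall fun z => eDensity_nonneg v z) hb.eventuallyLE
  rw [setIntegral_congr_fun measurableSet_ball hE] at h2
  rw [hE y hyr] at h1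
  have h3 := h1.trans (mul_le_mul_of_nonneg_left h2 (by positivity))
  rw [mul_comm, ← le_div_iff₀ hm] at h3
  refine h3.trans_eq ?_
  field_simp
  ring
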